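/- arXiv:1511.05878 — 4 statements merged into one kernel-verified Lean document; each statement's English description precedes it below -/
import Mathlib

section
/- Let (X, ρ) be a complete separable metric space and let p ≥ 1. Assume that for every Borel probability measure μ on the countable product ℕ → X there exists a Borel-measurable map ζ : Ω → (ℕ → X) whose law is μ. Define the Lᵖ metric on R(X) by d_p(ξ, η) = (∫ ρ(ξ(ω), η(ω))ᵖ dℙ(ω))^{1/p} ∈ [0, ∞]. Then for ξ ∈ R(X) and a sequence (ξₙ)ₙ in R(X), lim_{n→∞} d̂_p(ξ, ξₙ) = 0 if and only if there exist ξ′ ∈ R(X) and a sequence (ξₙ′)ₙ in R(X) such that L(ξ′) = L(ξ), L(ξₙ′) = L(ξₙ) for all n, and lim_{n→∞} d_p(ξ′, ξₙ′) = 0. -/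
open MeasureTheory Filter
open scoped ENNReal Topology

/-- The minimal functional associated with `e`:
`ê(ξ, η) = inf { e(ξ′, η′) | ξ′, η′ measurable, L(ξ′) = L(ξ), L(η′) = L(η) }`. -/
noncomputable def minPM {Ω X : Type*} [MeasurableSpace Ω] [MeasurableSpace X]
    (P : Measure Ω) (e : (Ω → X) → (Ω → X) → ℝ≥0∞) (ξ η : Ω → X) : ℝ≥0∞ :=
  ⨅ (ξ' : Ω → X) (η' : Ω → X) (_ : Measurable ξ') (_ : Measurable η')
    (_ : Measure.map ξ' P = Measure.map ξ P) (_ : Measure.map η' P = Measure.map η P),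
    e ξ' η'

/-- The `Lᵖ` metric on random variables:
`d_p(ξ, η) = (∫ ρ(ξ(ω), η(ω))ᵖ dℙ(ω))^(1/p) ∈ [0, ∞]`. -/
noncomputable def dLp {Ω X : Type*} [MeasurableSpace Ω] [MetricSpace X]
    (P : Measure Ω) (p : ℝ) (ξ η : Ω → X) : ℝ≥0∞ :=
  (∫⁻ ω, ENNReal.ofReal (dist (ξ ω) (η ω)) ^ p ∂P) ^ (1 / p)

/-- Gluing countably many couplings along a common first marginal. -/
theorem glue_couplings {X : Type*} [MeasurableSpace X] [StandardBorelSpace X] [Nonempty X]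
    (m : Measure X) [IsProbabilityMeasure m] (g : ℕ → Measure (X × X))
    [∀ n, IsProbabilityMeasure (g n)] (hg : ∀ n, (g n).fst = m) :
    ∃ μ : Measure (ℕ → X), IsProbabilityMeasure μ ∧
      ∀ n, Measure.map (fun x : ℕ → X => (x 0, x (n + 1))) μ = g n := by
  choose f hf hfm using fun n =>
    ProbabilityTheory.Kernel.exists_measurable_map_eq_unitInterval (g n).condKernel
  let ν : Measure (ℕ → unitInterval) := Measure.infinitePi (fun _ => volume)
  let F : X × (ℕ → unitInterval) → ℕ → X :=
    fun q i => Nat.casesOn i q.1 (fun n => f n q.1 (q.2 n))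
  have hF : Measurable F := by
    refine measurable_pi_lambda _ fun i => ?_
    cases i with
    | zero => exact measurable_fst
    | succ n =>
      exact (hf n).comp (measurable_fst.prodMk ((measurable_pi_apply n).comp measurable_snd))
  refine ⟨(m.prod ν).map F, Measure.isProbabilityMeasure_map hF.aemeasurable, fun n => ?_⟩
  have hm1 : Measurable (fun x : ℕ → X => (x 0, x (n + 1))) := by fun_prop
  have hG : Measurable (fun q : X × unitInterval => (q.1, f n q.1 q.2)) :=
    measurable_fst.prodMk (hf n)
  rw [Measure.map_map hm1 hF]
  have e1 : (fun x : ℕ → X => (x 0, x (n + 1))) ∘ F =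
      (fun q : X × unitInterval => (q.1, f n q.1 q.2)) ∘
        Prod.map id (fun u : ℕ → unitInterval => u n) := rfl
  rw [e1, ← Measure.map_map hG (by fun_prop),
    ← Measure.map_prod_map _ _ measurable_id (measurable_pi_apply n), Measure.map_id,
    Measure.infinitePi_map_eval]
  have e2 : g n = m.compProd (g n).condKernel := by
    rw [← hg n]; exact ((g n).disintegrate _).symm
  rw [e2]
  ext s hs
  rw [Measure.map_apply hG hs, Measure.prod_apply (hG hs), Measure.compProd_apply hs]
  refine lintegral_congr fun x => ?_
  rw [← hfm n x, Measure.map_apply ((hf n).of_uncurry_left) (measurable_prodMk_left hs)]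
  rfl

theorem dLp_eq_of_map_eq {Ω X : Type*} [MeasurableSpace Ω] [MetricSpace X]
    [TopologicalSpace.SeparableSpace X] [MeasurableSpace X] [BorelSpace X]
    (P : Measure Ω) (p : ℝ) {a b a' b' : Ω → X} (ha : Measurable a) (hb : Measurable b)
    (ha' : Measurable a') (hb' : Measurable b')
    (h : P.map (fun ω => (a ω, b ω)) = P.map (fun ω => (a' ω, b' ω))) :
    dLp P p a b = dLp P p a' b' := by
  have : SecondCountableTopology X := UniformSpace.secondCountable_of_separable X
  have hm : Measurable (fun q : X × X => ENNReal.ofReal (dist q.1 q.2) ^ p) := by fun_prop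
  unfold dLp
  rw [← lintegral_map hm (ha.prodMk hb), ← lintegral_map hm (ha'.prodMk hb'), h]

theorem minPM_le {Ω X : Type*} [MeasurableSpace Ω] [MeasurableSpace X]
    (P : Measure Ω) (e : (Ω → X) → (Ω → X) → ℝ≥0∞) (ξ η ξ' η' : Ω → X)
    (h1 : Measurable ξ') (h2 : Measurable η') (h3 : Measure.map ξ' P = Measure.map ξ P)
    (h4 : Measure.map η' P = Measure.map η P) : minPM P e ξ η ≤ e ξ' η' :=
  iInf_le_of_le ξ' <| iInf_le_of_le η' <| iInf_le_of_le h1 <| iInf_le_of_le h2 <|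
    iInf_le_of_le h3 <| iInf_le_of_le h4 le_rfl

theorem exists_near_minPM {Ω X : Type*} [MeasurableSpace Ω] [MeasurableSpace X]
    (P : Measure Ω) (e : (Ω → X) → (Ω → X) → ℝ≥0∞) (ξ η : Ω → X)
    (hξ : Measurable ξ) (hη : Measurable η) (ε : ℝ≥0∞) (hε : ε ≠ 0) :
    ∃ ξ' η' : Ω → X, Measurable ξ' ∧ Measurable η' ∧ Measure.map ξ' P = Measure.map ξ P ∧
      Measure.map η' P = Measure.map η P ∧ e ξ' η' ≤ minPM P e ξ η + ε := by
  by_cases ht : minPM P e ξ η = ∞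
  · exact ⟨ξ, η, hξ, hη, rfl, rfl, by simp [ht]⟩
  have hlt : minPM P e ξ η < minPM P e ξ η + ε := ENNReal.lt_add_right ht hε
  conv_lhs at hlt => unfold minPM
  simp only [iInf_lt_iff] at hlt
  obtain ⟨a, b, h1, h2, h3, h4, h5⟩ := hlt
  exact ⟨a, b, h1, h2, h3, h4, h5.le⟩

/-- On a complete separable metric space `X`, for `p ≥ 1`, assuming
every Borel probability measure on `ℕ → X` is the law of some random variable,
`d̂_p(ξ, ξₙ) → 0` iff there exist representatives `ξ′, (ξₙ′)ₙ` with `L(ξ′) = L(ξ)`,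
`L(ξₙ′) = L(ξₙ)` and `d_p(ξ′, ξₙ′) → 0`. -/
theorem tendsto_minPM_dLp_zero_iff
    {Ω X : Type*} [MeasurableSpace Ω]
    [MetricSpace X] [CompleteSpace X] [TopologicalSpace.SeparableSpace X]
    [MeasurableSpace X] [BorelSpace X]
    (P : Measure Ω) [IsProbabilityMeasure P]
    (hrich : ∀ μ : Measure (ℕ → X), IsProbabilityMeasure μ →
      ∃ ζ : Ω → ℕ → X, Measurable ζ ∧ Measure.map ζ P = μ)
    (p : ℝ) (hp : 1 ≤ p)
    (ξ : Ω → X) (hξ : Measurable ξ)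
    (ξs : ℕ → Ω → X) (hξs : ∀ n, Measurable (ξs n)) :
    Tendsto (fun n => minPM P (dLp P p) ξ (ξs n)) atTop (𝓝 0) ↔
    ∃ (ξ' : Ω → X) (ξs' : ℕ → Ω → X), Measurable ξ' ∧ (∀ n, Measurable (ξs' n)) ∧
      Measure.map ξ' P = Measure.map ξ P ∧
      (∀ n, Measure.map (ξs' n) P = Measure.map (ξs n) P) ∧
      Tendsto (fun n => dLp P p ξ' (ξs' n)) atTop (𝓝 0) := by
  constructor
  · intro h
    have : SecondCountableTopology X := UniformSpace.secondCountable_of_separable X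
    have : PolishSpace X := inferInstance
    obtain ⟨ω0⟩ : Nonempty Ω := nonempty_of_isProbabilityMeasure P
    have : Nonempty X := ⟨ξ ω0⟩
    choose a b ha hb ham hbm hab using fun n : ℕ =>
      exists_near_minPM P (dLp P p) ξ (ξs n) hξ (hξs n) ((n : ℝ≥0∞)⁻¹) (by simp)
    let g : ℕ → Measure (X × X) := fun n => P.map (fun ω => (a n ω, b n ω))
    have hgp : ∀ n, IsProbabilityMeasure (g n) := fun n =>
      Measure.isProbabilityMeasure_map ((ha n).prodMk (hb n)).aemeasurable
    have hmp : IsProbabilityMeasure (P.map ξ) := Measure.isProbabilityMeasure_map hξ.aemeasurable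
    obtain ⟨μ, hμ, hμg⟩ := glue_couplings (P.map ξ) g (fun n => by
      rw [← ham n]; exact Measure.fst_map_prodMk (hb n))
    obtain ⟨ζ, hζ, hζμ⟩ := hrich μ hμ
    have hc : ∀ i, Measurable (fun ω => ζ ω i) := fun i => (measurable_pi_apply i).comp hζ
    have hj : ∀ n, P.map (fun ω => (ζ ω 0, ζ ω (n + 1))) = P.map (fun ω => (a n ω, b n ω)) := by
      intro n
      have := hμg n
      rw [← hζμ, Measure.map_map (by fun_prop) hζ] at this
      exact this
    refine ⟨fun ω => ζ ω 0, fun n ω => ζ ω (n + 1), hc 0, fun n => hc _, ?_, fun n => ?_, ?_⟩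
    · have key := congrArg Measure.fst (hj 0)
      rw [Measure.fst_map_prodMk (hc _), Measure.fst_map_prodMk (hb 0)] at key
      exact key.trans (ham 0)
    · have key := congrArg Measure.snd (hj n)
      rw [Measure.snd_map_prodMk (hc _), Measure.snd_map_prodMk (ha n)] at key
      exact key.trans (hbm n)
    · have hl : Tendsto (fun n : ℕ => minPM P (dLp P p) ξ (ξs n) + (n : ℝ≥0∞)⁻¹) atTop (𝓝 0) := by
        simpa using h.add ENNReal.tendsto_inv_nat_nhds_zero
      refine tendsto_of_tendsto_of_tendsto_of_le_of_le tendsto_const_nhds hl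
        (fun _ => zero_le) fun n => ?_
      rw [dLp_eq_of_map_eq P p (hc 0) (hc (n + 1)) (ha n) (hb n) (hj n)]
      exact hab n
  · rintro ⟨ξ', ξs', h1, h2, h3, h4, h5⟩
    exact tendsto_of_tendsto_of_tendsto_of_le_of_le tendsto_const_nhds h5
      (fun _ => zero_le) fun n => minPM_le P _ _ _ _ _ h1 (h2 n) h3 (h4 n)
end

section
/- Let (X, ρ) be a complete separable metric space. Assume that for every Borel probability measure μ on the countable product ℕ → X there exists a Borel-measurable map ζ : Ω → (ℕ → X) whose law is μ. Define the L^∞ metric on R(X) by d_∞(ξ, η) = inf { ε > 0 | ℙ[ρ(ξ, η) ≥ ε] = 0 } ∈ [0, ∞]. Then for ξ ∈ R(X) and a sequence (ξₙ)ₙ in R(X), lim_{n→∞} d̂_∞(ξ, ξₙ) = 0 if and only if there exist ξ′ ∈ R(X) and a sequence (ξₙ′)ₙ in R(X) such that L(ξ′) = L(ξ), L(ξₙ′) = L(ξₙ) for all n, and lim_{n→∞} d_∞(ξ′, ξₙ′) = 0. -/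
open MeasureTheory Filter
open scoped ENNReal Topology

/-- The `L^∞` metric on random variables:
`d_∞(ξ, η) = inf { ε > 0 | ℙ[ρ(ξ, η) ≥ ε] = 0 } ∈ [0, ∞]`. -/
noncomputable def dLinf {Ω X : Type*} [MeasurableSpace Ω] [MetricSpace X]
    (P : Measure Ω) (ξ η : Ω → X) : ℝ≥0∞ :=
  ⨅ (ε : ℝ) (_ : 0 < ε) (_ : P {ω | ε ≤ dist (ξ ω) (η ω)} = 0), ENNReal.ofReal ε

lemma dLinf_congr_law {Ω X : Type*} [MeasurableSpace Ω]
    [MetricSpace X] [TopologicalSpace.SeparableSpace X]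
    [MeasurableSpace X] [BorelSpace X] (P : Measure Ω) {a b a' b' : Ω → X}
    (ha : Measurable a) (hb : Measurable b) (ha' : Measurable a') (hb' : Measurable b')
    (h : P.map (fun ω => (a ω, b ω)) = P.map (fun ω => (a' ω, b' ω))) :
    dLinf P a b = dLinf P a' b' := by
  have : SecondCountableTopology X := UniformSpace.secondCountable_of_separable X
  have key : ∀ ε : ℝ, P {ω | ε ≤ dist (a ω) (b ω)} = P {ω | ε ≤ dist (a' ω) (b' ω)} := by
    intro ε
    have hs : MeasurableSet {p : X × X | ε ≤ dist p.1 p.2} :=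
      measurableSet_le measurable_const (measurable_fst.dist measurable_snd)
    have h1 := congrArg (fun m => m {p : X × X | ε ≤ dist p.1 p.2}) h
    simp only [Measure.map_apply (ha.prodMk hb) hs, Measure.map_apply (ha'.prodMk hb') hs] at h1
    exact h1
  simp only [dLinf, key]

lemma exists_near_min {Ω X : Type*} [MeasurableSpace Ω] [MeasurableSpace X]
    (P : Measure Ω) (e : (Ω → X) → (Ω → X) → ℝ≥0∞) {ξ η : Ω → X}
    (hξ : Measurable ξ) (hη : Measurable η) {δ : ℝ≥0∞} (hδ : δ ≠ 0) :
    ∃ a b : Ω → X, Measurable a ∧ Measurable b ∧ P.map a = P.map ξ ∧ P.map b = P.map η ∧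
      e a b ≤ minPM P e ξ η + δ := by
  by_cases ht : minPM P e ξ η = ⊤
  · exact ⟨ξ, η, hξ, hη, rfl, rfl, by simp [ht]⟩
  · have hlt := ENNReal.lt_add_right ht hδ
    conv_lhs at hlt => rw [minPM]
    simp only [iInf_lt_iff] at hlt
    obtain ⟨a, b, ha, hb, h1, h2, h⟩ := hlt
    exact ⟨a, b, ha, hb, h1, h2, h.le⟩

lemma exists_transfer {Ω X : Type*} [MeasurableSpace Ω] [MeasurableSpace X]
    [StandardBorelSpace X] (P : Measure Ω) [IsProbabilityMeasure P] {a b : Ω → X}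
    (ha : Measurable a) (hb : Measurable b) :
    ∃ f : X → unitInterval → X, Measurable (Function.uncurry f) ∧
      ((P.map a).prod volume).map (fun p => (p.1, f p.1 p.2)) =
        P.map (fun ω => (a ω, b ω)) := by
  have : Nonempty Ω := nonempty_of_isProbabilityMeasure P
  have : Nonempty X := ⟨a (Classical.arbitrary Ω)⟩
  have : IsProbabilityMeasure (P.map a) := Measure.isProbabilityMeasure_map ha.aemeasurable
  obtain ⟨f, hf, hfκ⟩ := ProbabilityTheory.Kernel.exists_measurable_map_eq_unitInterval
    (ProbabilityTheory.condDistrib b a P)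
  refine ⟨f, hf, ?_⟩
  have hm : Measurable (fun p : X × unitInterval => (p.1, f p.1 p.2)) :=
    measurable_fst.prodMk hf
  rw [← ProbabilityTheory.compProd_map_condDistrib hb.aemeasurable]
  ext s hs
  rw [Measure.map_apply hm hs, Measure.prod_apply (hm hs), Measure.compProd_apply hs]
  refine lintegral_congr fun x => ?_
  rw [← hfκ x, Measure.map_apply (by fun_prop) (measurable_prodMk_left hs)]
  rfl

/-- On a complete separable metric space `X`, assuming every Borel
probability measure on `ℕ → X` is the law of some random variable,
`d̂_∞(ξ, ξₙ) → 0` iff there exist representatives `ξ′, (ξₙ′)ₙ` with `L(ξ′) = L(ξ)`,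
`L(ξₙ′) = L(ξₙ)` and `d_∞(ξ′, ξₙ′) → 0`. -/
theorem tendsto_minPM_dLinf_zero_iff
    {Ω X : Type*} [MeasurableSpace Ω]
    [MetricSpace X] [CompleteSpace X] [TopologicalSpace.SeparableSpace X]
    [MeasurableSpace X] [BorelSpace X]
    (P : Measure Ω) [IsProbabilityMeasure P]
    (hrich : ∀ μ : Measure (ℕ → X), IsProbabilityMeasure μ →
      ∃ ζ : Ω → ℕ → X, Measurable ζ ∧ Measure.map ζ P = μ)
    (ξ : Ω → X) (hξ : Measurable ξ)
    (ξs : ℕ → Ω → X) (hξs : ∀ n, Measurable (ξs n)) :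
    Tendsto (fun n => minPM P (dLinf P) ξ (ξs n)) atTop (𝓝 0) ↔
    ∃ (ξ' : Ω → X) (ξs' : ℕ → Ω → X), Measurable ξ' ∧ (∀ n, Measurable (ξs' n)) ∧
      Measure.map ξ' P = Measure.map ξ P ∧
      (∀ n, Measure.map (ξs' n) P = Measure.map (ξs n) P) ∧
      Tendsto (fun n => dLinf P ξ' (ξs' n)) atTop (𝓝 0) := by
  constructor
  · intro h
    have : SecondCountableTopology X := UniformSpace.secondCountable_of_separable X
    have : PolishSpace X := inferInstance
    have : StandardBorelSpace X := inferInstance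
    have hδ : ∀ n : ℕ, ((n : ℝ≥0∞))⁻¹ ≠ 0 := fun n =>
      ENNReal.inv_ne_zero.2 (ENNReal.natCast_ne_top n)
    choose a b ha hb hal hbl hab using fun n =>
      exists_near_min P (dLinf P) hξ (hξs n) (hδ n)
    choose f hf hfl using fun n => exists_transfer P (ha n) (hb n)
    have : IsProbabilityMeasure (P.map ξ) := Measure.isProbabilityMeasure_map hξ.aemeasurable
    let g : X × unitInterval → ℕ → X := fun p k => Nat.casesOn k p.1 (fun n => f n p.1 p.2)
    have hg : Measurable g := by
      refine measurable_pi_lambda _ fun k => ?_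
      cases k with
      | zero => exact measurable_fst
      | succ n => exact hf n
    obtain ⟨ζ, hζ, hζl⟩ := hrich (((P.map ξ).prod volume).map g)
      (Measure.isProbabilityMeasure_map hg.aemeasurable)
    have hζm : ∀ k, Measurable (fun ω => ζ ω k) := fun k => (measurable_pi_apply k).comp hζ
    have hjoint : ∀ n, P.map (fun ω => (ζ ω 0, ζ ω (n + 1))) =
        P.map (fun ω => (a n ω, b n ω)) := by
      intro n
      have hpr : Measurable (fun x : ℕ → X => (x 0, x (n + 1))) := by fun_prop
      rw [← hfl n, hal n]
      have := congrArg (Measure.map (fun x : ℕ → X => (x 0, x (n + 1)))) hζl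
      rw [Measure.map_map hpr hζ, Measure.map_map hpr hg] at this
      exact this
    refine ⟨fun ω => ζ ω 0, fun n ω => ζ ω (n + 1), hζm 0, fun n => hζm _, ?_, ?_, ?_⟩
    · have := congrArg (Measure.map Prod.fst) (hjoint 0)
      rw [Measure.map_map measurable_fst ((hζm 0).prodMk (hζm _)),
        Measure.map_map measurable_fst ((ha 0).prodMk (hb 0))] at this
      exact this.trans (hal 0)
    · intro n
      have := congrArg (Measure.map Prod.snd) (hjoint n)
      rw [Measure.map_map measurable_snd ((hζm 0).prodMk (hζm _)),
        Measure.map_map measurable_snd ((ha n).prodMk (hb n))] at this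
      exact this.trans (hbl n)
    · have h2 : Tendsto (fun n => minPM P (dLinf P) ξ (ξs n) + ((n : ℝ≥0∞))⁻¹) atTop (𝓝 0) := by
        simpa using h.add ENNReal.tendsto_inv_nat_nhds_zero
      refine tendsto_of_tendsto_of_tendsto_of_le_of_le tendsto_const_nhds h2
        (fun _ => bot_le) fun n => ?_
      have := dLinf_congr_law P (hζm 0) (hζm (n + 1)) (ha n) (hb n) (hjoint n)
      exact this.trans_le (hab n)
  · rintro ⟨ξ', ξs', h1, h2, h3, h4, h5⟩
    refine tendsto_of_tendsto_of_tendsto_of_le_of_le tendsto_const_nhds h5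
      (fun _ => bot_le) fun n => ?_
    exact iInf_le_of_le ξ' <| iInf_le_of_le (ξs' n) <| iInf_le_of_le h1 <|
      iInf_le_of_le (h2 n) <| iInf_le_of_le h3 <| iInf_le_of_le (h4 n) le_rfl
end

section
/- Let X be a Polish space. Assume that for every Borel probability measure μ on the countable product ℕ → X there exists a Borel-measurable map ζ : Ω → (ℕ → X) whose law is μ. Define the indicator metric on R(X) by d_i(ξ, η) = ℙ[ξ ≠ η]. Then for ξ ∈ R(X) and a sequence (ξₙ)ₙ in R(X), lim_{n→∞} d̂_i(ξ, ξₙ) = 0 if and only if there exist ξ′ ∈ R(X) and a sequence (ξₙ′)ₙ in R(X) such that L(ξ′) = L(ξ), L(ξₙ′) = L(ξₙ) for all n, and lim_{n→∞} ℙ[ξ′ ≠ ξₙ′] = 0. -/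
open MeasureTheory Filter
open scoped ENNReal Topology

open MeasureTheory Filter

/-- The indicator metric on random variables: `d_i(ξ, η) = ℙ[ξ ≠ η]`. -/
noncomputable def dInd {Ω X : Type*} [MeasurableSpace Ω]
    (P : Measure Ω) (ξ η : Ω → X) : ℝ≥0∞ :=
  P {ω | ξ ω ≠ η ω}

/-- Randomization of a kernel: pushing `ν × volume` through `(x, u) ↦ (x, f x u)` gives `ν ⊗ₘ κ`. -/
lemma map_prod_eq_compProd {X : Type*} [MeasurableSpace X] (ν : Measure X) [IsProbabilityMeasure ν]
    (κ : ProbabilityTheory.Kernel X X) [ProbabilityTheory.IsMarkovKernel κ]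
    (f : X → unitInterval → X) (hf : Measurable (Function.uncurry f))
    (hfk : ∀ a, (volume : Measure unitInterval).map (f a) = κ a) :
    (ν.prod (volume : Measure unitInterval)).map (fun p => (p.1, f p.1 p.2)) = ν.compProd κ := by
  have hm : Measurable (fun p : X × unitInterval => (p.1, f p.1 p.2)) :=
    measurable_fst.prodMk hf
  ext s hs
  rw [Measure.map_apply hm hs, Measure.prod_apply (hm hs), Measure.compProd_apply hs]
  refine lintegral_congr fun a => ?_
  have hfa : Measurable (f a) := hf.comp measurable_prodMk_left
  rw [← hfk a, Measure.map_apply hfa (measurable_prodMk_left hs)]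
  rfl

/-- Near-optimal couplings exist. -/
lemma exists_near_opt {Ω X : Type*} [MeasurableSpace Ω] [MeasurableSpace X]
    (P : Measure Ω) [IsProbabilityMeasure P] (ξ η : Ω → X) (hξ : Measurable ξ) (hη : Measurable η)
    (ε : ℝ≥0∞) (hε : ε ≠ 0) :
    ∃ ξ' η' : Ω → X, Measurable ξ' ∧ Measurable η' ∧ Measure.map ξ' P = Measure.map ξ P ∧
      Measure.map η' P = Measure.map η P ∧
      P {ω | ξ' ω ≠ η' ω} < minPM P (dInd P) ξ η + ε := by
  have hfin : minPM P (dInd P) ξ η ≠ ⊤ := by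
    refine ne_top_of_le_ne_top (measure_ne_top P {ω | ξ ω ≠ η ω}) ?_
    unfold minPM
    exact iInf₂_le_of_le ξ η (iInf₂_le_of_le hξ hη (iInf₂_le_of_le rfl rfl le_rfl))
  have h := ENNReal.lt_add_right hfin hε
  conv_lhs at h => unfold minPM
  simp only [iInf_lt_iff] at h
  obtain ⟨ξ', η', h1, h2, h3, h4, h5⟩ := h
  exact ⟨ξ', η', h1, h2, h3, h4, h5⟩

/-- On a Polish space `X`, assuming every Borel probability measure
on `ℕ → X` is the law of some random variable, `d̂_i(ξ, ξₙ) → 0` iff there exist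
representatives `ξ′, (ξₙ′)ₙ` with `L(ξ′) = L(ξ)`, `L(ξₙ′) = L(ξₙ)` and
`ℙ[ξ′ ≠ ξₙ′] → 0`. -/
theorem tendsto_minPM_dInd_zero_iff
    {Ω X : Type*} [MeasurableSpace Ω]
    [TopologicalSpace X] [PolishSpace X] [MeasurableSpace X] [BorelSpace X]
    (P : Measure Ω) [IsProbabilityMeasure P]
    (hrich : ∀ μ : Measure (ℕ → X), IsProbabilityMeasure μ →
      ∃ ζ : Ω → ℕ → X, Measurable ζ ∧ Measure.map ζ P = μ)
    (ξ : Ω → X) (hξ : Measurable ξ)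
    (ξs : ℕ → Ω → X) (hξs : ∀ n, Measurable (ξs n)) :
    Tendsto (fun n => minPM P (dInd P) ξ (ξs n)) atTop (𝓝 0) ↔
    ∃ (ξ' : Ω → X) (ξs' : ℕ → Ω → X), Measurable ξ' ∧ (∀ n, Measurable (ξs' n)) ∧
      Measure.map ξ' P = Measure.map ξ P ∧
      (∀ n, Measure.map (ξs' n) P = Measure.map (ξs n) P) ∧
      Tendsto (fun n => P {ω | ξ' ω ≠ ξs' n ω}) atTop (𝓝 0) := by
  constructor
  · intro h
    have : Nonempty Ω := nonempty_of_isProbabilityMeasure P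
    have : Nonempty X := this.map ξ
    have hε : ∀ n : ℕ, ((n : ℝ≥0∞))⁻¹ ≠ 0 := fun n => by simp
    choose η θ hη hθ hηl hθl hlt using fun n : ℕ =>
      exists_near_opt P ξ (ξs n) hξ (hξs n) _ (hε n)
    choose f hf hfk using fun n : ℕ =>
      (ProbabilityTheory.condDistrib (θ n) (η n) P).exists_measurable_map_eq_unitInterval
    have hν : IsProbabilityMeasure (P.map ξ) := Measure.isProbabilityMeasure_map hξ.aemeasurable
    have key : ∀ n, ((P.map ξ).prod (volume : Measure unitInterval)).map
        (fun p => (p.1, f n p.1 p.2)) = P.map fun ω => (η n ω, θ n ω) := fun n => by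
      rw [map_prod_eq_compProd (P.map ξ) _ (f n) (hf n) (hfk n), ← hηl n,
        ProbabilityTheory.compProd_map_condDistrib (hθ n).aemeasurable]
    let g : X × unitInterval → ℕ → X := fun p k =>
      Nat.casesOn (motive := fun _ => X) k p.1 (fun n => f n p.1 p.2)
    have hg : Measurable g := by
      refine measurable_pi_lambda _ fun k => ?_
      cases k with
      | zero => exact measurable_fst
      | succ n => exact hf n
    obtain ⟨ζ, hζ, hζl⟩ := hrich (((P.map ξ).prod (volume : Measure unitInterval)).map g)
      (Measure.isProbabilityMeasure_map hg.aemeasurable)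
    have hζm : ∀ k, Measurable fun ω => ζ ω k := fun k => (measurable_pi_apply k).comp hζ
    have pair : ∀ n, P.map (fun ω => (ζ ω 0, ζ ω (n + 1))) = P.map fun ω => (η n ω, θ n ω) := by
      intro n
      have hq : Measurable (fun z : ℕ → X => (z 0, z (n + 1))) :=
        (measurable_pi_apply 0).prodMk (measurable_pi_apply (n + 1))
      have e1 : P.map (fun ω => (ζ ω 0, ζ ω (n + 1))) =
          (P.map ζ).map (fun z : ℕ → X => (z 0, z (n + 1))) := by
        rw [Measure.map_map hq hζ]; rfl
      rw [e1, hζl, Measure.map_map hq hg, ← key n]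
      rfl
    refine ⟨fun ω => ζ ω 0, fun n ω => ζ ω (n + 1), hζm 0, fun n => hζm (n + 1), ?_, ?_, ?_⟩
    · have := congrArg (Measure.map Prod.fst) (pair 0)
      rw [Measure.map_map measurable_fst ((hζm 0).prodMk (hζm 1)),
        Measure.map_map measurable_fst ((hη 0).prodMk (hθ 0))] at this
      exact this.trans (hηl 0)
    · intro n
      have := congrArg (Measure.map Prod.snd) (pair n)
      rw [Measure.map_map measurable_snd ((hζm 0).prodMk (hζm (n + 1))),
        Measure.map_map measurable_snd ((hη n).prodMk (hθ n))] at this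
      exact this.trans (hθl n)
    · have hs : MeasurableSet {p : X × X | p.1 ≠ p.2} :=
        (measurableSet_eq_fun measurable_fst measurable_snd).compl
      have e : ∀ n, P {ω | ζ ω 0 ≠ ζ ω (n + 1)} = P {ω | η n ω ≠ θ n ω} := by
        intro n
        have := congrArg (fun m : Measure (X × X) => m {p | p.1 ≠ p.2}) (pair n)
        rw [Measure.map_apply ((hζm 0).prodMk (hζm (n + 1))) hs,
          Measure.map_apply ((hη n).prodMk (hθ n)) hs] at this
        exact this
      have hlim := h.add ENNReal.tendsto_inv_nat_nhds_zero
      rw [add_zero] at hlim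
      refine tendsto_of_tendsto_of_tendsto_of_le_of_le tendsto_const_nhds hlim
        (fun _ => zero_le) fun n => ?_
      rw [e n]
      exact (hlt n).le
  · rintro ⟨ξ', ξs', h1, h2, h3, h4, h5⟩
    refine tendsto_of_tendsto_of_tendsto_of_le_of_le tendsto_const_nhds h5
      (fun _ => zero_le) fun n => ?_
    unfold minPM
    exact iInf₂_le_of_le ξ' (ξs' n)
      (iInf₂_le_of_le h1 (h2 n) (iInf₂_le_of_le h3 (h4 n) le_rfl))
end

section
/- Let (X, ρ) be a complete separable metric space. Assume that for every Borel probability measure μ on the countable product ℕ → X there exists a Borel-measurable map ζ : Ω → (ℕ → X) whose law is μ. Define the Ky-Fan metric on R(X) by K(ξ, η) = inf { ε > 0 | ℙ[ρ(ξ, η) ≥ ε] < ε }. Then for ξ ∈ R(X) and a sequence (ξₙ)ₙ in R(X), lim_{n→∞} K̂(ξ, ξₙ) = 0 if and only if there exist ξ′ ∈ R(X) and a sequence (ξₙ′)ₙ in R(X) such that L(ξ′) = L(ξ), L(ξₙ′) = L(ξₙ) for all n, and (ξₙ′)ₙ converges to ξ′ in ℙ-probability (i.e. for every ε > 0, ℙ[ρ(ξₙ′,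 ξ′) ≥ ε] → 0). -/
open MeasureTheory Filter
open scoped ENNReal Topology

/-- The Ky-Fan metric on random variables:
`K(ξ, η) = inf { ε > 0 | ℙ[ρ(ξ, η) ≥ ε] < ε }`. -/
noncomputable def kyFan {Ω X : Type*} [MeasurableSpace Ω] [MetricSpace X]
    (P : Measure Ω) (ξ η : Ω → X) : ℝ≥0∞ :=
  ⨅ (ε : ℝ) (_ : 0 < ε) (_ : P {ω | ε ≤ dist (ξ ω) (η ω)} < ENNReal.ofReal ε),
    ENNReal.ofReal ε

lemma kyFan_lt_imp {Ω X : Type*} [MeasurableSpace Ω] [MetricSpace X]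
    (P : Measure Ω) (a b : Ω → X) (δ : ℝ) (h : kyFan P a b < ENNReal.ofReal δ) :
    P {ω | δ ≤ dist (a ω) (b ω)} ≤ ENNReal.ofReal δ := by
  simp only [kyFan, iInf_lt_iff] at h
  obtain ⟨ε, hε, hP, hlt⟩ := h
  have hle : ε ≤ δ := by
    by_contra! hc
    exact absurd hlt (not_lt.2 (ENNReal.ofReal_le_ofReal hc.le))
  calc P {ω | δ ≤ dist (a ω) (b ω)} ≤ P {ω | ε ≤ dist (a ω) (b ω)} :=
        measure_mono fun ω hω => le_trans hle hω
    _ ≤ ENNReal.ofReal ε := hP.le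
    _ ≤ _ := hlt.le

lemma kyFan_le_of {Ω X : Type*} [MeasurableSpace Ω] [MetricSpace X]
    (P : Measure Ω) (a b : Ω → X) (δ : ℝ) (hδ : 0 < δ)
    (h : P {ω | δ ≤ dist (a ω) (b ω)} < ENNReal.ofReal δ) :
    kyFan P a b ≤ ENNReal.ofReal δ :=
  iInf_le_of_le δ (iInf_le_of_le hδ (iInf_le_of_le h le_rfl))

lemma minPM_le_of {Ω X : Type*} [MeasurableSpace Ω] [MeasurableSpace X]
    (P : Measure Ω) (e : (Ω → X) → (Ω → X) → ℝ≥0∞) (ξ η a b : Ω → X)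
    (ha : Measurable a) (hb : Measurable b) (h1 : Measure.map a P = Measure.map ξ P)
    (h2 : Measure.map b P = Measure.map η P) : minPM P e ξ η ≤ e a b :=
  iInf_le_of_le a (iInf_le_of_le b (iInf_le_of_le ha (iInf_le_of_le hb
    (iInf_le_of_le h1 (iInf_le_of_le h2 le_rfl)))))

lemma exists_transport {Ω X : Type*} [MeasurableSpace Ω] [MeasurableSpace X]
    [StandardBorelSpace X] [Nonempty X]
    (P : Measure Ω) [IsProbabilityMeasure P] (a b : Ω → X) (ha : Measurable a)
    (hb : Measurable b) :
    ∃ f : X → unitInterval → X, Measurable (Function.uncurry f) ∧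
      Measure.map (fun p : X × unitInterval => (p.1, f p.1 p.2))
        ((Measure.map a P).prod volume) = Measure.map (fun ω => (a ω, b ω)) P := by
  obtain ⟨f, hf, hfm⟩ :=
    (ProbabilityTheory.condDistrib b a P).exists_measurable_map_eq_unitInterval
  refine ⟨f, hf, ?_⟩
  have hmeas : Measurable (fun p : X × unitInterval => (p.1, f p.1 p.2)) :=
    measurable_fst.prodMk hf
  have := Measure.isProbabilityMeasure_map (μ := P) ha.aemeasurable
  rw [← ProbabilityTheory.compProd_map_condDistrib hb.aemeasurable]
  ext s hs
  rw [Measure.map_apply hmeas hs, Measure.prod_apply (hmeas hs), Measure.compProd_apply hs]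
  refine lintegral_congr fun x => ?_
  rw [← hfm x, Measure.map_apply hf.of_uncurry_left (measurable_prodMk_left hs)]
  rfl

lemma exists_pos_real_lt (η : ℝ≥0∞) (hη : 0 < η) : ∃ δ : ℝ, 0 < δ ∧ ENNReal.ofReal δ < η := by
  obtain ⟨δ, -, h1, h2⟩ := ENNReal.lt_iff_exists_real_btwn.1 hη
  exact ⟨δ, ENNReal.ofReal_pos.1 h1, h2⟩

/-- On a complete separable metric space `X`, assuming every Borel
probability measure on `ℕ → X` is the law of some random variable,
`K̂(ξ, ξₙ) → 0` iff there exist representatives `ξ′, (ξₙ′)ₙ` with `L(ξ′) = L(ξ)`,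
`L(ξₙ′) = L(ξₙ)` and `ξₙ′ → ξ′` in ℙ-probability. -/
theorem tendsto_minPM_kyFan_zero_iff
    {Ω X : Type*} [MeasurableSpace Ω]
    [MetricSpace X] [CompleteSpace X] [TopologicalSpace.SeparableSpace X]
    [MeasurableSpace X] [BorelSpace X]
    (P : Measure Ω) [IsProbabilityMeasure P]
    (hrich : ∀ μ : Measure (ℕ → X), IsProbabilityMeasure μ →
      ∃ ζ : Ω → ℕ → X, Measurable ζ ∧ Measure.map ζ P = μ)
    (ξ : Ω → X) (hξ : Measurable ξ)
    (ξs : ℕ → Ω → X) (hξs : ∀ n, Measurable (ξs n)) :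
    Tendsto (fun n => minPM P (kyFan P) ξ (ξs n)) atTop (𝓝 0) ↔
    ∃ (ξ' : Ω → X) (ξs' : ℕ → Ω → X), Measurable ξ' ∧ (∀ n, Measurable (ξs' n)) ∧
      Measure.map ξ' P = Measure.map ξ P ∧
      (∀ n, Measure.map (ξs' n) P = Measure.map (ξs n) P) ∧
      (∀ ε : ℝ, 0 < ε →
        Tendsto (fun n => P {ω | ε ≤ dist (ξs' n ω) (ξ' ω)}) atTop (𝓝 0)) := by
  constructor
  · intro h
    have hΩ : Nonempty Ω := nonempty_of_isProbabilityMeasure P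
    have hX : Nonempty X := hΩ.map ξ
    have : PolishSpace X := inferInstance
    have hex : ∀ n : ℕ, ∃ a b : Ω → X, Measurable a ∧ Measurable b ∧
        Measure.map a P = Measure.map ξ P ∧ Measure.map b P = Measure.map (ξs n) P ∧
        kyFan P a b < minPM P (kyFan P) ξ (ξs n) + ((n : ℝ≥0∞) + 1)⁻¹ := by
      intro n
      have hfin : minPM P (kyFan P) ξ (ξs n) ≠ ⊤ := by
        refine ne_top_of_le_ne_top ENNReal.ofReal_ne_top
          ((minPM_le_of P (kyFan P) ξ (ξs n) ξ (ξs n) hξ (hξs n) rfl rfl).trans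
            (kyFan_le_of P _ _ 2 two_pos (lt_of_le_of_lt prob_le_one ?_)))
        rw [← ENNReal.ofReal_one]
        exact (ENNReal.ofReal_lt_ofReal_iff two_pos).2 one_lt_two
      have hlt : minPM P (kyFan P) ξ (ξs n) <
          minPM P (kyFan P) ξ (ξs n) + ((n : ℝ≥0∞) + 1)⁻¹ := by
        refine ENNReal.lt_add_right hfin ?_
        simp
      conv_lhs at hlt => rw [minPM]
      simp only [iInf_lt_iff] at hlt
      obtain ⟨a, b, ha, hb, h1, h2, h3⟩ := hlt
      exact ⟨a, b, ha, hb, h1, h2, h3⟩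
    choose a b ha hb hla hlb hK using hex
    have hKt : Tendsto (fun n => kyFan P (a n) (b n)) atTop (𝓝 0) := by
      have h0 : Tendsto (fun n : ℕ => ((n : ℝ≥0∞) + 1)⁻¹) atTop (𝓝 0) := by
        have := (tendsto_add_atTop_iff_nat 1).2 ENNReal.tendsto_inv_nat_nhds_zero
        simpa using this
      have h1 := h.add h0
      rw [add_zero] at h1
      exact tendsto_of_tendsto_of_tendsto_of_le_of_le tendsto_const_nhds h1
        (fun _ => zero_le) (fun n => (hK n).le)
    have hex2 := fun n => exists_transport P (a n) (b n) (ha n) (hb n)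
    choose f hf hfm using hex2
    simp only [hla] at hfm
    have hpr := Measure.isProbabilityMeasure_map (μ := P) hξ.aemeasurable
    let g : X × unitInterval → ℕ → X := fun p k => Nat.casesOn k p.1 (fun n => f n p.1 p.2)
    have hg : Measurable g := by
      refine measurable_pi_lambda _ fun k => ?_
      cases k with
      | zero => exact measurable_fst
      | succ n => exact hf n
    have hν := Measure.isProbabilityMeasure_map
      (μ := (Measure.map ξ P).prod (volume : Measure unitInterval)) hg.aemeasurable
    obtain ⟨ζ, hζ, hζm⟩ := hrich _ hν
    have hζk : ∀ k, Measurable fun ω => ζ ω k := fun k => (measurable_pi_apply k).comp hζ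
    have hpair : ∀ n, Measure.map (fun ω => (ζ ω 0, ζ ω (n + 1))) P =
        Measure.map (fun ω => (a n ω, b n ω)) P := by
      intro n
      rw [← hfm n]
      have hm : Measurable (fun z : ℕ → X => (z 0, z (n + 1))) :=
        (measurable_pi_apply 0).prodMk (measurable_pi_apply (n + 1))
      have e1 : Measure.map (fun ω => (ζ ω 0, ζ ω (n + 1))) P =
          Measure.map (fun z : ℕ → X => (z 0, z (n + 1))) (Measure.map ζ P) :=
        (Measure.map_map hm hζ).symm
      rw [e1, hζm, Measure.map_map hm hg]
      rfl
    refine ⟨fun ω => ζ ω 0, fun n ω => ζ ω (n + 1), hζk 0, fun n => hζk _, ?_, ?_, ?_⟩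
    · have := congrArg (Measure.map Prod.fst) (hpair 0)
      rw [Measure.map_map measurable_fst ((hζk _).prodMk (hζk _)),
        Measure.map_map measurable_fst ((ha 0).prodMk (hb 0))] at this
      exact this.trans (hla 0)
    · intro n
      have := congrArg (Measure.map Prod.snd) (hpair n)
      rw [Measure.map_map measurable_snd ((hζk _).prodMk (hζk _)),
        Measure.map_map measurable_snd ((ha n).prodMk (hb n))] at this
      exact this.trans (hlb n)
    · intro ε hε
      have heq : ∀ n, P {ω | ε ≤ dist (ζ ω (n + 1)) (ζ ω 0)} =
          P {ω | ε ≤ dist (a n ω) (b n ω)} := by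
        intro n
        have hS : MeasurableSet {p : X × X | ε ≤ dist p.1 p.2} :=
          measurableSet_le measurable_const (measurable_fst.dist measurable_snd)
        have := congrArg (fun m => m {p : X × X | ε ≤ dist p.1 p.2}) (hpair n)
        rw [Measure.map_apply ((hζk _).prodMk (hζk _)) hS,
          Measure.map_apply ((ha n).prodMk (hb n)) hS] at this
        simp only [dist_comm (ζ _ (n + 1))]
        exact this
      simp only [heq]
      rw [ENNReal.tendsto_nhds_zero]
      intro η hη
      obtain ⟨δ, hδ, hδη⟩ := exists_pos_real_lt η hη
      have hm : 0 < min ε δ := lt_min hε hδ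
      filter_upwards [hKt.eventually_lt_const (ENNReal.ofReal_pos.2 hm)] with n hn
      calc P {ω | ε ≤ dist (a n ω) (b n ω)}
          ≤ P {ω | min ε δ ≤ dist (a n ω) (b n ω)} :=
            measure_mono fun ω (hω : ε ≤ _) => show min ε δ ≤ _ from (min_le_left ε δ).trans hω
        _ ≤ ENNReal.ofReal (min ε δ) := kyFan_lt_imp P _ _ _ hn
        _ ≤ ENNReal.ofReal δ := ENNReal.ofReal_le_ofReal (min_le_right _ _)
        _ ≤ η := hδη.le
  · rintro ⟨ξ', ξs', hm, hms, hl, hls, ht⟩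
    rw [ENNReal.tendsto_nhds_zero]
    intro η hη
    obtain ⟨δ, hδ, hδη⟩ := exists_pos_real_lt η hη
    filter_upwards [(ht δ hδ).eventually_lt_const (ENNReal.ofReal_pos.2 hδ)] with n hn
    simp only [dist_comm (ξs' n _)] at hn
    exact ((minPM_le_of P (kyFan P) ξ (ξs n) ξ' (ξs' n) hm (hms n) hl (hls n)).trans
      (kyFan_le_of P _ _ δ hδ hn)).trans hδη.le
end
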